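/- arXiv:1604.03689 — 3 statements merged into one kernel-verified Lean document; each statement's English description precedes it below -/
import Mathlib

section
/- Let Y be an exponential random variable with rate 1 and let X be a nonnegative real random variable independent of Y; let C > 0 be real. Define erfc(x) = (2/√π) ∫_x^∞ e^{−t²} dt. Then E[ erfc²( √( Y / (X + C) ) ) ] = 1 − (2/√π) ∫_0^∞ z^{−1/2} e^{−z(1 + C)} erfc(√z) E[e^{−z X}] dz. -/
/-!
For `Z ≥ 0` and `f` differentiable on `(0, ∞)` with `f'` integrable there, Fubini turns
`f Z = f 0 + ∫_0^Z f'(z) dz` into `E[f(Z)] = f 0 + ∫_0^∞ P(z < Z) f'(z) dz`. If `Z = Y / D` with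
`Y` exponential of rate `r` and `D > 0` independent of `Y`, the tail `P(z < Z) = P(z D < Y)` is the
Laplace transform `E[e^{-rzD}]`. For `f z = erfc²(√z)` one has `f 0 = 1` and
`f' z = -(2/√π) z^{-1/2} e^{-z} erfc(√z)`, which is integrable because `0 ≤ erfc(√z) ≤ 1`.
-/

open MeasureTheory ProbabilityTheory Real

/-- The complementary error function `erfc x = (2/√π) ∫_x^∞ e^{−t²} dt`. -/
noncomputable def erfc (x : ℝ) : ℝ :=
  (2 / Real.sqrt π) * ∫ t in Set.Ioi x, Real.exp (-t ^ 2)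

open Set

section Erfc

lemma integrable_exp_neg_sq : Integrable fun t : ℝ => exp (-t ^ 2) := by
  simpa using integrable_exp_neg_mul_sq (b := 1) one_pos

lemma erfc_zero : erfc 0 = 1 := by
  have hgauss : ∫ t in Ioi (0:ℝ), exp (-t ^ 2) = √π / 2 := by
    simpa using integral_gaussian_Ioi 1
  have hπ : √π ≠ 0 := by positivity
  rw [erfc, hgauss]
  field_simp

lemma erfc_nonneg (x : ℝ) : 0 ≤ erfc x :=
  mul_nonneg (by positivity) (integral_nonneg fun t => (exp_pos _).le)

lemma antitone_erfc : Antitone erfc := fun _ _ hxy =>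
  mul_le_mul_of_nonneg_left
    (setIntegral_mono_set integrable_exp_neg_sq.integrableOn
      (Filter.Eventually.of_forall fun t => (exp_pos _).le) (Ioi_subset_Ioi hxy).eventuallyLE)
    (by positivity)

lemma erfc_le_one {x : ℝ} (hx : 0 ≤ x) : erfc x ≤ 1 :=
  erfc_zero ▸ antitone_erfc hx

lemma erfc_eq_erfc_zero_sub (x : ℝ) :
    erfc x = erfc 0 - 2 / √π * ∫ t in (0:ℝ)..x, exp (-t ^ 2) := by
  rw [erfc, erfc, ← intervalIntegral.integral_interval_add_Ioi (a := 0) (b := x)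
    integrable_exp_neg_sq.integrableOn integrable_exp_neg_sq.integrableOn]
  ring

lemma hasDerivAt_erfc (x : ℝ) : HasDerivAt erfc (-(2 / √π * exp (-x ^ 2))) x := by
  have hcont : Continuous fun t : ℝ => exp (-t ^ 2) := by fun_prop
  have hderiv := ((hcont.integral_hasStrictDerivAt 0 x).hasDerivAt.const_mul
    (2 / √π)).const_sub (erfc 0)
  rwa [← funext erfc_eq_erfc_zero_sub] at hderiv

lemma continuous_erfc : Continuous erfc :=
  continuous_iff_continuousAt.2 fun x => (hasDerivAt_erfc x).continuousAt

lemma hasDerivAt_erfc_sqrt_sq {z : ℝ} (hz : 0 < z) :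
    HasDerivAt (fun z => erfc (√z) ^ 2)
      (-(2 / √π) * (z ^ (-(1/2) : ℝ) * exp (-z) * erfc √z)) z := by
  refine (((hasDerivAt_erfc √z).comp z (hasDerivAt_sqrt hz.ne')).pow 2).congr_deriv ?_
  have hsqrt : √z ≠ 0 := by positivity
  rw [rpow_neg hz.le, ← sqrt_eq_rpow, sq_sqrt hz.le, Function.comp_apply]
  field_simp
  norm_num

lemma integrableOn_rpow_mul_exp_neg_mul_erfc_sqrt {s : ℝ} (hs : -1 < s) :
    IntegrableOn (fun z : ℝ => z ^ s * exp (-z) * erfc √z) (Ioi 0) := by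
  have hgamma : IntegrableOn (fun z : ℝ => z ^ s * exp (-z)) (Ioi 0) := by
    simpa [mul_comm] using GammaIntegral_convergent (neg_lt_iff_pos_add.1 hs)
  refine hgamma.mul_bdd (c := 1)
    (continuous_erfc.comp continuous_sqrt).aestronglyMeasurable
    (Filter.Eventually.of_forall fun z => ?_)
  rw [norm_of_nonneg (erfc_nonneg _)]
  exact erfc_le_one (sqrt_nonneg z)

end Erfc

section LayerCake

variable {Ω E : Type*} {mΩ : MeasurableSpace Ω} {μ : Measure Ω} [IsFiniteMeasure μ]
  [NormedAddCommGroup E] {Z : Ω → ℝ} {f f' g : ℝ → E}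

lemma integrable_indicator_Iio_prod (hZ : AEMeasurable Z μ) (hg : IntegrableOn g (Ioi 0)) :
    Integrable (Function.uncurry fun (ω : Ω) (z : ℝ) => (Iio (Z ω)).indicator g z)
      (μ.prod (volume.restrict (Ioi 0))) :=
  (hg.comp_snd μ).indicator₀ (nullMeasurableSet_lt measurable_snd.aemeasurable hZ.comp_fst)

variable [NormedSpace ℝ E]

lemma intervalIntegral_eq_integral_Ioi_indicator (g : ℝ → E) {x : ℝ} (hx : 0 ≤ x) :
    ∫ z in 0..x, g z = ∫ z in Ioi 0, (Iio x).indicator g z := by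
  rw [setIntegral_indicator measurableSet_Iio, Ioi_inter_Iio,
    intervalIntegral.integral_of_le hx, integral_Ioc_eq_integral_Ioo]

lemma integrable_intervalIntegral_comp (hZ : AEMeasurable Z μ) (hZ0 : 0 ≤ᵐ[μ] Z)
    (hg : IntegrableOn g (Ioi 0)) : Integrable (fun ω => ∫ z in 0..Z ω, g z) μ :=
  (integrable_indicator_Iio_prod hZ hg).integral_prod_left.congr <|
    hZ0.mono fun _ hω => (intervalIntegral_eq_integral_Ioi_indicator g hω).symm

lemma integral_intervalIntegral_comp_eq_integral_measureReal_lt_smul [CompleteSpace E]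
    (hZ : AEMeasurable Z μ) (hZ0 : 0 ≤ᵐ[μ] Z) (hg : IntegrableOn g (Ioi 0)) :
    ∫ ω, (∫ z in 0..Z ω, g z) ∂μ = ∫ z in Ioi 0, μ.real {ω | z < Z ω} • g z :=
  calc ∫ ω, (∫ z in 0..Z ω, g z) ∂μ
      = ∫ ω, (∫ z in Ioi 0, (Iio (Z ω)).indicator g z) ∂μ :=
        integral_congr_ae <| hZ0.mono fun _ hω => intervalIntegral_eq_integral_Ioi_indicator g hω
    _ = ∫ z in Ioi 0, (∫ ω, {ω | z < Z ω}.indicator (fun _ => g z) ω ∂μ) :=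
        integral_integral_swap (integrable_indicator_Iio_prod hZ hg)
    _ = ∫ z in Ioi 0, μ.real {ω | z < Z ω} • g z := by
        congr with z
        rw [integral_indicator₀ (nullMeasurableSet_lt aemeasurable_const hZ), setIntegral_const]

theorem integral_comp_eq_add_integral_measureReal_lt_smul [CompleteSpace E]
    (hZ : AEMeasurable Z μ) (hZ0 : 0 ≤ᵐ[μ] Z) (hf0 : ContinuousWithinAt f (Ici 0) 0)
    (hf : ∀ z ∈ Ioi 0, HasDerivAt f (f' z) z) (hf' : IntegrableOn f' (Ioi 0)) :
    ∫ ω, f (Z ω) ∂μ = μ.real univ • f 0 + ∫ z in Ioi 0, μ.real {ω | z < Z ω} • f' z := by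
  have hcont : ContinuousOn f (Ici 0) := by
    intro z hz
    rcases (mem_Ici.1 hz).eq_or_lt with rfl | hz
    · exact hf0
    · exact (hf z hz).continuousAt.continuousWithinAt
  have hFTC {x : ℝ} (hx : 0 ≤ x) : f x = f 0 + ∫ z in 0..x, f' z := by
    rw [intervalIntegral.integral_eq_sub_of_hasDerivAt_of_le hx (hcont.mono Icc_subset_Ici_self)
      (fun z hz => hf z hz.1)
      ((intervalIntegrable_iff_integrableOn_Ioc_of_le hx).2 (hf'.mono_set Ioc_subset_Ioi_self)),
      add_sub_cancel]
  rw [integral_congr_ae (hZ0.mono fun _ hω => hFTC hω),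
    integral_add (integrable_const _) (integrable_intervalIntegral_comp hZ hZ0 hf'),
    integral_const, integral_intervalIntegral_comp_eq_integral_measureReal_lt_smul hZ hZ0 hf']

end LayerCake

section Exponential

lemma measureReal_expMeasure_Ioi {r : ℝ} (hr : 0 < r) {x : ℝ} (hx : 0 ≤ x) :
    (expMeasure r).real (Ioi x) = exp (-(r * x)) := by
  have := isProbabilityMeasure_expMeasure hr
  rw [← compl_Iic, probReal_compl_eq_one_sub measurableSet_Iic, ← cdf_eq_real,
    cdf_expMeasure_eq hr, if_pos hx, sub_sub_cancel]

lemma ae_pos_expMeasure {r : ℝ} (hr : 0 < r) : ∀ᵐ x ∂expMeasure r, 0 < x := by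
  have := isProbabilityMeasure_expMeasure hr
  have hreal : (expMeasure r).real (Ioi 0) = 1 := by
    rw [measureReal_expMeasure_Ioi hr le_rfl, mul_zero, neg_zero, exp_zero]
  exact (mem_ae_iff_prob_eq_one measurableSet_Ioi).2 <|
    (ENNReal.toReal_eq_one_iff _).1 hreal

variable {Ω : Type*} {mΩ : MeasurableSpace Ω} {μ : Measure Ω} {A D Y : Ω → ℝ} {r : ℝ}

lemma measureReal_lt_eq_integral_measureReal_Ioi {ν : Measure ℝ} [IsFiniteMeasure ν]
    (hA : AEMeasurable A μ) (hY : HasLaw Y ν μ) (hAY : IndepFun A Y μ) :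
    μ.real {ω | A ω < Y ω} = ∫ ω, ν.real (Ioi (A ω)) ∂μ := by
  have := hY.isFiniteMeasure
  have hlt : MeasurableSet {p : ℝ × ℝ | p.1 < p.2} := measurableSet_lt measurable_fst measurable_snd
  have hlaw : HasLaw (fun ω => (A ω, Y ω)) ((μ.map A).prod ν) μ := hAY.hasLaw_prod ⟨hA, rfl⟩ hY
  have hmeas : Measurable fun a => ν (Ioi a) := measurable_measure_prodMk_left hlt
  calc μ.real {ω | A ω < Y ω}
      = ((μ.map A).prod ν).real {p | p.1 < p.2} := hlaw.measureReal_eq hlt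
    _ = (∫⁻ a, ν (Ioi a) ∂μ.map A).toReal := by
        rw [measureReal_def, Measure.prod_apply hlt]; rfl
    _ = ∫ a, ν.real (Ioi a) ∂μ.map A :=
        (integral_toReal hmeas.aemeasurable (Filter.Eventually.of_forall fun _ =>
          measure_lt_top ν _)).symm
    _ = ∫ ω, ν.real (Ioi (A ω)) ∂μ :=
        integral_map hA hmeas.ennreal_toReal.aestronglyMeasurable

lemma measureReal_lt_eq_integral_exp_neg (hr : 0 < r) (hA : AEMeasurable A μ) (hA0 : 0 ≤ᵐ[μ] A)
    (hY : HasLaw Y (expMeasure r) μ) (hAY : IndepFun A Y μ) :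
    μ.real {ω | A ω < Y ω} = ∫ ω, exp (-(r * A ω)) ∂μ := by
  have := isProbabilityMeasure_expMeasure hr
  rw [measureReal_lt_eq_integral_measureReal_Ioi hA hY hAY]
  exact integral_congr_ae <| hA0.mono fun _ hω => measureReal_expMeasure_Ioi hr hω

theorem integral_comp_div_eq_add_integral_laplace_smul {E : Type*} [NormedAddCommGroup E]
    [NormedSpace ℝ E] [CompleteSpace E] {f f' : ℝ → E} (hr : 0 < r)
    (hY : HasLaw Y (expMeasure r) μ) (hD : AEMeasurable D μ) (hD0 : ∀ᵐ ω ∂μ, 0 < D ω)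
    (hYD : IndepFun Y D μ) (hf0 : ContinuousWithinAt f (Ici 0) 0)
    (hf : ∀ z ∈ Ioi 0, HasDerivAt f (f' z) z) (hf' : IntegrableOn f' (Ioi 0)) :
    ∫ ω, f (Y ω / D ω) ∂μ =
      f 0 + ∫ z in Ioi 0, (∫ ω, exp (-(r * (z * D ω))) ∂μ) • f' z := by
  have := isProbabilityMeasure_expMeasure hr
  have := hY.isProbabilityMeasure
  have hZ0 : 0 ≤ᵐ[μ] fun ω => Y ω / D ω := by
    have hY0 : ∀ᵐ ω ∂μ, 0 < Y ω := (hY.ae_iff (by fun_prop)).2 (ae_pos_expMeasure hr)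
    filter_upwards [hY0, hD0] with ω hYω hDω
    exact (div_pos hYω hDω).le
  have htail : ∀ z ∈ Ioi (0:ℝ),
      μ.real {ω | z < Y ω / D ω} = ∫ ω, exp (-(r * (z * D ω))) ∂μ := by
    intro z hz
    rw [← measureReal_lt_eq_integral_exp_neg hr (hD.const_mul z)
      (hD0.mono fun ω hω => (mul_pos hz hω).le) hY
      (hYD.symm.comp (measurable_const_mul z) measurable_id)]
    exact measureReal_congr <| hD0.mono fun ω hω => propext (lt_div_iff₀ hω)
  rw [integral_comp_eq_add_integral_measureReal_lt_smul (hY.aemeasurable.fun_div hD) hZ0 hf0 hf hf',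
    probReal_univ, one_smul,
    setIntegral_congr_fun measurableSet_Ioi fun z hz => by rw [htail z hz]]

end Exponential

theorem stmt10_general {Ω : Type*} {mΩ : MeasurableSpace Ω} {μ : Measure Ω} {Y X : Ω → ℝ}
    {r C : ℝ} (hr : 0 < r) (hY : HasLaw Y (expMeasure r) μ) (hX : AEMeasurable X μ)
    (hXC : ∀ᵐ ω ∂μ, 0 < X ω + C) (hindep : IndepFun Y X μ) :
    ∫ ω, erfc √(Y ω / (X ω + C)) ^ 2 ∂μ =
      1 - 2 / √π * ∫ z in Ioi (0:ℝ),
        z ^ (-(1/2) : ℝ) * exp (-z * (1 + r * C)) * erfc √z * ∫ ω, exp (-z * (r * X ω)) ∂μ := by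
  have hlaplace (z : ℝ) : ∫ ω, exp (-(r * (z * (X ω + C)))) ∂μ =
      exp (-z * (r * C)) * ∫ ω, exp (-z * (r * X ω)) ∂μ := by
    rw [← integral_const_mul]
    congr with ω
    rw [← exp_add]
    ring_nf
  have hcont : Continuous fun z => erfc √z ^ 2 := (continuous_erfc.comp continuous_sqrt).pow 2
  rw [integral_comp_div_eq_add_integral_laplace_smul (f := fun z => erfc √z ^ 2) hr hY
    (hX.add_const C) hXC (hindep.comp measurable_id (measurable_add_const C))
    hcont.continuousWithinAt (fun z hz => hasDerivAt_erfc_sqrt_sq hz)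
    ((integrableOn_rpow_mul_exp_neg_mul_erfc_sqrt (by norm_num)).const_mul _),
    sqrt_zero, erfc_zero, one_pow, sub_eq_add_neg, ← neg_mul, ← integral_const_mul]
  congr with z
  rw [hlaplace, mul_add, mul_one, exp_add, smul_eq_mul]
  ring

/-- Hamdi's lemma (squared-erfc, `m = 1` case): for `Y` unit-rate exponential, `X ≥ 0`
independent of `Y`, and `C > 0`,
`E[erfc²(√(Y/(X+C)))] = 1 − (2/√π) ∫_0^∞ z^{−1/2} e^{−z(1+C)} erfc(√z) E[e^{−zX}] dz`. -/
theorem stmt10 {Ω : Type*} [MeasurableSpace Ω] (μ : Measure Ω) [IsProbabilityMeasure μ]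
    (Y X : Ω → ℝ) (hY : Measurable Y) (hX : Measurable X)
    (hYexp : μ.map Y = expMeasure 1)
    (hXnonneg : ∀ ω, 0 ≤ X ω)
    (hindep : IndepFun Y X μ)
    (C : ℝ) (hC : 0 < C) :
    ∫ ω, (erfc (Real.sqrt (Y ω / (X ω + C)))) ^ 2 ∂μ =
      1 - (2 / Real.sqrt π) * ∫ z in Set.Ioi (0:ℝ),
        z ^ (-(1/2) : ℝ) * Real.exp (-z * (1 + C)) * erfc (Real.sqrt z) *
          ∫ ω, Real.exp (-z * X ω) ∂μ := by
  simpa only [one_mul] using stmt10_general one_pos ⟨hY.aemeasurable, hYexp⟩ hX.aemeasurable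
    (.of_forall fun ω => add_pos_of_nonneg_of_pos (hXnonneg ω) hC) hindep
end

section
/- Let m ≥ 1 be an integer and let Y be a Gamma-distributed random variable with shape m and rate m (so E[Y] = 1). Let X be a nonnegative real random variable independent of Y and let C > 0 be real. Define erfc(x) = (2/√π) ∫_x^∞ e^{−t²} dt. Then E[ erfc( √( Y / (X + C) ) ) ] = 1 − (Γ(m + 1/2)/Γ(m)) (2/π) ∫_0^∞ z^{−1/2} e^{−z(1 + mC)} · ( ∑_{n=0}^{m−1} ((1−m)_n / ((3/2)_n n!)) z^n ) · E[e^{−m z X}] dz, where (a)_n denotes the Pochhammer symbol, so the inner sum is the polynomial ₁F₁(1 − m; 3/2; z). -/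
open MeasureTheory ProbabilityTheory Real

/-!
The complementary error function is a Gamma tail: `erfc √x = P(U ≥ x)` for `U ∼ Gamma(1/2, 1)`.
Hence `E[erfc √(Y/b)] = P(Y ≤ b U)` for `U` independent of `Y`, and for integer shape `m = M + 1`
and rate `r`, `P(Y ≤ b u) = 1 - e^{-r b u} ∑_{k ≤ M} (r b u)^k / k!`. The claim for a constant
denominator `b` therefore compares two Laplace transforms with respect to the law of `U`, at
`s = r b`: that of the Kummer polynomial and the expectation of the Erlang tail. Integrated
termwise, with `w = 1 / (1 + s)`, both are multiples of
`w^{1/2} ∑ₙ (M choose n) (1/2) / (1/2 + n) (-w)ⁿ`; for the tail, this re-expansion of a truncated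
binomial series in powers of `1 - w` is an induction on `M`. Averaging over the independent
denominator turns `e^{-r b z}` into a moment generating function. Nothing here is special to the
shape `1/2`: the comparison holds for `U ∼ Gamma(a, 1)` with any `a > 0`.
-/

open scoped Nat

lemma Gamma_add_natCast {a : ℝ} (ha : 0 < a) (n : ℕ) :
    Gamma (a + n) = (ascPochhammer ℝ n).eval a * Gamma a := by
  induction n with
  | zero => simp
  | succ n ih =>
    rw [ascPochhammer_succ_eval, Nat.cast_succ, ← add_assoc, Gamma_add_one (by positivity), ih]
    ring

lemma mul_ascPochhammer_eval_add_one {S : Type*} [CommSemiring S] (a : S) (n : ℕ) :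
    a * (ascPochhammer S n).eval (a + 1) = (ascPochhammer S n).eval a * (a + n) := by
  rw [← ascPochhammer_succ_eval, ascPochhammer_succ_left]
  simp

section GammaMeasure

variable {a r : ℝ}

lemma measurable_gammaPDF (a r : ℝ) : Measurable (gammaPDF a r) :=
  (measurable_gammaPDFReal a r).ennreal_ofReal

lemma ae_pos_gammaMeasure (a r : ℝ) : ∀ᵐ x ∂gammaMeasure a r, 0 < x := by
  rw [gammaMeasure, ae_withDensity_iff (measurable_gammaPDF a r)]
  filter_upwards [Measure.ae_ne volume 0] with x hx hpdf
  exact lt_of_le_of_ne (not_lt.1 fun hneg => hpdf (gammaPDF_of_neg hneg)) hx.symm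

lemma integral_gammaMeasure {E : Type*} [NormedAddCommGroup E] [NormedSpace ℝ E]
    (ha : 0 < a) (hr : 0 < r) (f : ℝ → E) :
    ∫ x, f x ∂gammaMeasure a r =
      ∫ x in Set.Ioi 0, (r ^ a / Gamma a * x ^ (a - 1) * exp (-(r * x))) • f x := by
  rw [gammaMeasure, integral_withDensity_eq_integral_toReal_smul
    (measurable_gammaPDF a r) (ae_of_all _ fun _ => ENNReal.ofReal_lt_top),
    ← integral_Ici_eq_integral_Ioi, ← integral_indicator measurableSet_Ici]
  congr 1 with x
  by_cases hx : 0 ≤ x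
  · rw [Set.indicator_of_mem (Set.mem_Ici.2 hx), gammaPDF_of_nonneg hx,
      ENNReal.toReal_ofReal (by positivity)]
  · simp [hx, gammaPDF_of_neg (not_le.1 hx)]

lemma measureReal_gammaMeasure (ha : 0 < a) (hr : 0 < r) {s : Set ℝ} (hs : MeasurableSet s) :
    (gammaMeasure a r).real s =
      ∫ x in Set.Ioi 0 ∩ s, r ^ a / Gamma a * x ^ (a - 1) * exp (-(r * x)) := by
  rw [← integral_indicator_one hs, integral_gammaMeasure ha hr, ← setIntegral_indicator hs]
  congr 1 with x
  by_cases hx : x ∈ s <;> simp [hx]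

lemma integral_pow_mul_exp_neg_gammaMeasure {s : ℝ} (ha : 0 < a) (hr : 0 < r) (hs : -r < s)
    (n : ℕ) :
    ∫ x, x ^ n * exp (-(s * x)) ∂gammaMeasure a r =
      (r / (r + s)) ^ a * ((ascPochhammer ℝ n).eval a / (r + s) ^ n) := by
  have hrs : 0 < r + s := by linarith
  have hdensity : ∀ x ∈ Set.Ioi (0 : ℝ),
      (r ^ a / Gamma a * x ^ (a - 1) * exp (-(r * x))) • (x ^ n * exp (-(s * x))) =
        r ^ a / Gamma a * (x ^ (a + n - 1) * exp (-((r + s) * x))) := by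
    intro x hx
    rw [add_sub_right_comm, rpow_add_natCast (ne_of_gt hx), add_mul, neg_add, exp_add, smul_eq_mul]
    ring
  rw [integral_gammaMeasure ha hr, setIntegral_congr_fun measurableSet_Ioi hdensity,
    integral_const_mul, integral_rpow_mul_exp_neg_mul_Ioi (by positivity) hrs,
    Gamma_add_natCast ha, one_div, inv_rpow hrs.le, rpow_add_natCast hrs.ne',
    div_rpow hr.le hrs.le]
  have hGamma : Gamma a ≠ 0 := (Gamma_pos_of_pos ha).ne'
  field_simp

lemma integrable_pow_mul_exp_neg_gammaMeasure {s : ℝ} (ha : 0 < a) (hr : 0 < r) (hs : -r < s)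
    (n : ℕ) : Integrable (fun x => x ^ n * exp (-(s * x))) (gammaMeasure a r) := by
  refine .of_integral_ne_zero ?_
  have hrs : 0 < r + s := by linarith
  have hpoch := ascPochhammer_pos n a ha
  rw [integral_pow_mul_exp_neg_gammaMeasure ha hr hs]
  positivity

end GammaMeasure

lemma erfc_sqrt_eq_gammaMeasure_real_Ici (x : ℝ) :
    erfc √x = (gammaMeasure (1 / 2) 1).real (Set.Ici x) := by
  have hset : (Set.Ioi 0 ∩ Set.Ici x : Set ℝ) =ᵐ[volume] Set.Ioi (max 0 x) := by
    rw [← Set.Ioi_inter_Ioi]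
    exact (ae_eq_refl _).inter Ioi_ae_eq_Ici.symm
  have hsqrt : (max 0 x) ^ (2⁻¹ : ℝ) = √x := by
    rw [inv_eq_one_div, ← sqrt_eq_rpow, sqrt_monotone.map_max, sqrt_zero,
      max_eq_right (sqrt_nonneg x)]
  have hsubst : ∀ t ∈ Set.Ioi √x, 2 / √π * exp (-t ^ 2) =
      (2 * t ^ ((2 : ℝ) - 1)) • ((1 : ℝ) ^ (1 / 2 : ℝ) / Gamma (1 / 2) *
        (t ^ (2 : ℝ)) ^ ((1 / 2 : ℝ) - 1) * exp (-(1 * t ^ (2 : ℝ)))) := by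
    intro t ht
    have htpos : 0 < t := (sqrt_nonneg x).trans_lt ht
    have hcancel : t * (t ^ (2 : ℝ)) ^ ((1 / 2 : ℝ) - 1) = 1 := by
      rw [← rpow_mul htpos.le, show (2 : ℝ) * (1 / 2 - 1) = -1 by norm_num, rpow_neg_one,
        mul_inv_cancel₀ htpos.ne']
    rw [Gamma_one_half_eq, one_rpow, show (2 : ℝ) - 1 = 1 by norm_num, rpow_one, smul_eq_mul]
    calc 2 / √π * exp (-t ^ 2)
        = 2 / √π * exp (-t ^ 2) * (t * (t ^ (2 : ℝ)) ^ ((1 / 2 : ℝ) - 1)) := by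
          rw [hcancel, mul_one]
      _ = 2 * t * (1 / √π * (t ^ (2 : ℝ)) ^ ((1 / 2 : ℝ) - 1) * exp (-(1 * t ^ (2 : ℝ)))) := by
          rw [one_mul, rpow_two]
          ring
  rw [measureReal_gammaMeasure one_half_pos one_pos measurableSet_Ici, setIntegral_congr_set hset,
    ← integral_comp_rpow_Ioi_of_pos' two_pos (le_max_left 0 x), hsqrt, erfc,
    ← integral_const_mul]
  exact setIntegral_congr_fun measurableSet_Ioi hsubst

section Erlang

/-- The polynomial-exponential function `e^{-x} ∑_{k ≤ M} x^k / k!`; for `0 ≤ y`, the value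
`erlangTail M (r * y)` is `P(Y > y)` for a Gamma variable `Y` of shape `M + 1` and rate `r`. -/
noncomputable def erlangTail (M : ℕ) (x : ℝ) : ℝ :=
  exp (-x) * ∑ k ∈ Finset.range (M + 1), x ^ k / k !

lemma erlangTail_zero_left (x : ℝ) : erlangTail 0 x = exp (-x) := by
  simp [erlangTail]

lemma erlangTail_zero_right (M : ℕ) : erlangTail M 0 = 1 := by
  simp [erlangTail, Finset.sum_range_succ']

lemma erlangTail_succ (M : ℕ) (x : ℝ) :
    erlangTail (M + 1) x = erlangTail M x + exp (-x) * (x ^ (M + 1) / (M + 1)!) := by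
  rw [erlangTail, Finset.sum_range_succ, mul_add, erlangTail]

lemma hasDerivAt_erlangTail (M : ℕ) (x : ℝ) :
    HasDerivAt (erlangTail M) (-(x ^ M / M ! * exp (-x))) x := by
  have hexp : HasDerivAt (fun x : ℝ => exp (-x)) (-exp (-x)) x := by
    simpa using (hasDerivAt_neg x).exp
  induction M with
  | zero => simpa [funext (erlangTail_zero_left ·)] using hexp
  | succ M ih =>
    have hterm := hexp.mul ((hasDerivAt_pow (M + 1) x).div_const ((M + 1)! : ℝ))
    refine ((ih.add hterm).congr_of_eventuallyEq
      (.of_forall (erlangTail_succ M))).congr_deriv ?_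
    simp only [Nat.factorial_succ, Nat.cast_mul, Nat.cast_succ, Nat.add_sub_cancel]
    field_simp
    ring

lemma cdf_gammaMeasure_natCast_add_one {r : ℝ} (hr : 0 < r) (M : ℕ) {y : ℝ} (hy : 0 ≤ y) :
    cdf (gammaMeasure (M + 1) r) y = 1 - erlangTail M (r * y) := by
  have hM : (0 : ℝ) < M + 1 := by positivity
  have := isProbabilityMeasure_gammaMeasure hM hr
  have hderiv (x : ℝ) : HasDerivAt (fun x => -erlangTail M (r * x))
      (r ^ ((M : ℝ) + 1) / M ! * x ^ M * exp (-(r * x))) x := by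
    refine ((hasDerivAt_erlangTail M (r * x)).comp x (hasDerivAt_const_mul r)).neg.congr_deriv ?_
    rw [rpow_add_one hr.ne', rpow_natCast]
    ring
  rw [cdf_eq_real, measureReal_gammaMeasure hM hr measurableSet_Iic, Set.Ioi_inter_Iic,
    ← intervalIntegral.integral_of_le hy]
  simp only [add_sub_cancel_right, rpow_natCast, Gamma_nat_eq_factorial]
  rw [intervalIntegral.integral_eq_sub_of_hasDerivAt (fun x _ => hderiv x)
      (Continuous.intervalIntegrable (by fun_prop) _ _),
    mul_zero, erlangTail_zero_right]
  ring

end Erlang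

/-- The Kummer polynomial `₁F₁(-M; c; z)`, of degree `M` in `z`. -/
noncomputable def kummerPoly (M : ℕ) (c z : ℝ) : ℝ :=
  ∑ n ∈ Finset.range (M + 1),
    (ascPochhammer ℝ n).eval (-(M : ℝ)) / ((ascPochhammer ℝ n).eval c * n !) * z ^ n

/-- The polynomial `₂F₁(-M, a; a + 1; w) = a ∫_0^1 u^{a-1} (1 - w u)^M du`, an incomplete Beta
function. Up to elementary factors it is the Laplace transform of both `kummerPoly M (a + 1)` and
`erlangTail M` with respect to the Gamma law of shape `a`, in the variable `w = 1 / (1 + s)`. -/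
noncomputable def incompleteBetaPoly (M : ℕ) (a w : ℝ) : ℝ :=
  ∑ n ∈ Finset.range (M + 1), M.choose n * (a / (a + n)) * (-w) ^ n

lemma incompleteBetaPoly_recurrence {a : ℝ} (ha : 0 < a) (M : ℕ) (w : ℝ) :
    (a + M + 1) * incompleteBetaPoly (M + 1) a w =
      (M + 1) * incompleteBetaPoly M a w + a * (1 - w) ^ (M + 1) := by
  have hextend : incompleteBetaPoly M a w =
      ∑ n ∈ Finset.range (M + 1 + 1), M.choose n * (a / (a + n)) * (-w) ^ n := by
    simp [incompleteBetaPoly, Finset.sum_range_succ _ (M + 1)]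
  have hbinomial : (1 - w) ^ (M + 1) =
      ∑ n ∈ Finset.range (M + 1 + 1), (M + 1).choose n * (-w) ^ n := by
    rw [sub_eq_neg_add, add_pow]
    exact Finset.sum_congr rfl fun n _ => by ring
  rw [hextend, hbinomial, incompleteBetaPoly]
  simp only [Finset.mul_sum, ← Finset.sum_add_distrib]
  refine Finset.sum_congr rfl fun n hn => ?_
  have hchoose : (M.choose n : ℝ) * (M + 1) = (M + 1).choose n * (M + 1 - n) := by
    have hle : n ≤ M + 1 := Nat.lt_succ_iff.1 (Finset.mem_range.1 hn)
    have hcast := congrArg (Nat.cast (R := ℝ)) (Nat.choose_mul_succ_eq M n)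
    push_cast [Nat.cast_sub hle] at hcast
    exact hcast
  have han : a + n ≠ 0 := by positivity
  field_simp
  linear_combination -(-w) ^ n * hchoose

lemma sum_ascPochhammer_div_factorial_mul_one_sub_pow {a : ℝ} (ha : 0 < a) (M : ℕ) (w : ℝ) :
    ∑ k ∈ Finset.range (M + 1), (ascPochhammer ℝ k).eval a / k ! * (1 - w) ^ k =
      (ascPochhammer ℝ M).eval (a + 1) / M ! * incompleteBetaPoly M a w := by
  induction M with
  | zero => simp [incompleteBetaPoly, ha.ne']
  | succ M ih =>
    have hrec := incompleteBetaPoly_recurrence ha M w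
    have hpoch := mul_ascPochhammer_eval_add_one a M
    rw [Finset.sum_range_succ, ih, ascPochhammer_succ_eval, ascPochhammer_succ_eval, ← hpoch,
      Nat.factorial_succ]
    push_cast
    field_simp
    linear_combination -(ascPochhammer ℝ M).eval (a + 1) * hrec

lemma kummerPoly_coeff_mul_ascPochhammer {a : ℝ} (ha : 0 < a) (M n : ℕ) :
    (ascPochhammer ℝ n).eval (-(M : ℝ)) / ((ascPochhammer ℝ n).eval (a + 1) * n !) *
        (ascPochhammer ℝ n).eval a =
      M.choose n * (a / (a + n)) * (-1) ^ n := by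
  have hneg : (ascPochhammer ℝ n).eval (-(M : ℝ)) = (-1) ^ n * (n ! * M.choose n) := by
    rw [ascPochhammer_eval_neg_eq_descPochhammer, descPochhammer_eval_eq_descFactorial,
      Nat.descFactorial_eq_factorial_mul_choose, Nat.cast_mul]
  have hpoch := mul_ascPochhammer_eval_add_one a n
  have hpos : (ascPochhammer ℝ n).eval (a + 1) ≠ 0 := (ascPochhammer_pos n _ (by positivity)).ne'
  have han : a + n ≠ 0 := by positivity
  rw [hneg]
  field_simp
  linear_combination -(M.choose n : ℝ) * hpoch

section Laplace

variable {a s : ℝ}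

lemma integral_kummerPoly_mul_exp_neg_gammaMeasure (ha : 0 < a) (hs : -1 < s) (M : ℕ) :
    ∫ z, kummerPoly M (a + 1) z * exp (-(s * z)) ∂gammaMeasure a 1 =
      (1 / (1 + s)) ^ a * incompleteBetaPoly M a (1 / (1 + s)) := by
  simp only [kummerPoly, Finset.sum_mul, mul_assoc]
  rw [integral_finsetSum _ fun n _ =>
    (integrable_pow_mul_exp_neg_gammaMeasure ha one_pos hs n).const_mul _, incompleteBetaPoly,
    Finset.mul_sum]
  refine Finset.sum_congr rfl fun n _ => ?_
  rw [integral_const_mul, integral_pow_mul_exp_neg_gammaMeasure ha one_pos hs, neg_pow,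
    one_div_pow]
  linear_combination
    (1 / (1 + s)) ^ a * (1 / (1 + s) ^ n) * kummerPoly_coeff_mul_ascPochhammer ha M n

lemma erlangTail_mul (M : ℕ) (s u : ℝ) :
    erlangTail M (s * u) =
      ∑ k ∈ Finset.range (M + 1), s ^ k / k ! * (u ^ k * exp (-(s * u))) := by
  rw [erlangTail, Finset.mul_sum]
  exact Finset.sum_congr rfl fun k _ => by ring

lemma integrable_erlangTail_mul_gammaMeasure (ha : 0 < a) (hs : -1 < s) (M : ℕ) :
    Integrable (fun u => erlangTail M (s * u)) (gammaMeasure a 1) := by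
  simp only [erlangTail_mul]
  exact integrable_finsetSum _ fun k _ =>
    (integrable_pow_mul_exp_neg_gammaMeasure ha one_pos hs k).const_mul _

lemma integral_erlangTail_mul_gammaMeasure (ha : 0 < a) (hs : -1 < s) (M : ℕ) :
    ∫ u, erlangTail M (s * u) ∂gammaMeasure a 1 =
      (ascPochhammer ℝ M).eval (a + 1) / M ! *
        ∫ z, kummerPoly M (a + 1) z * exp (-(s * z)) ∂gammaMeasure a 1 := by
  have hs' : 1 + s ≠ 0 := by linarith
  have hw : 1 - 1 / (1 + s) = s / (1 + s) := by field_simp; ring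
  simp only [erlangTail_mul]
  rw [integral_finsetSum _ fun k _ =>
    (integrable_pow_mul_exp_neg_gammaMeasure ha one_pos hs k).const_mul _,
    integral_kummerPoly_mul_exp_neg_gammaMeasure ha hs, mul_left_comm,
    ← sum_ascPochhammer_div_factorial_mul_one_sub_pow ha, Finset.mul_sum, hw]
  refine Finset.sum_congr rfl fun k _ => ?_
  rw [integral_const_mul, integral_pow_mul_exp_neg_gammaMeasure ha one_pos hs, div_pow]
  ring

end Laplace

lemma integrable_kummerPoly_gammaMeasure {a r : ℝ} (ha : 0 < a) (hr : 0 < r) (M : ℕ) (c : ℝ) :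
    Integrable (kummerPoly M c) (gammaMeasure a r) := by
  refine integrable_finsetSum _ fun n _ => Integrable.const_mul ?_ _
  simpa using integrable_pow_mul_exp_neg_gammaMeasure ha hr (neg_lt_zero.2 hr) n

lemma integral_measureReal_Ici_div (ν γ : Measure ℝ) [IsProbabilityMeasure ν]
    [IsProbabilityMeasure γ] {b : ℝ} (hb : 0 < b) :
    ∫ y, γ.real (Set.Ici (y / b)) ∂ν = ∫ u, cdf ν (b * u) ∂γ := by
  have hmeas : MeasurableSet {p : ℝ × ℝ | p.1 ≤ b * p.2} :=
    measurableSet_le (by fun_prop) (by fun_prop)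
  have hint : Integrable ({p : ℝ × ℝ | p.1 ≤ b * p.2}.indicator 1) (ν.prod γ) :=
    (integrable_const (1 : ℝ)).indicator hmeas
  calc ∫ y, γ.real (Set.Ici (y / b)) ∂ν
      = ∫ y, ∫ u, {p : ℝ × ℝ | p.1 ≤ b * p.2}.indicator (1 : ℝ × ℝ → ℝ) (y, u) ∂γ ∂ν := by
        congr 1 with y
        rw [← integral_indicator_one measurableSet_Ici]
        simp [Set.indicator, div_le_iff₀' hb]
    _ = ∫ u, ∫ y, {p : ℝ × ℝ | p.1 ≤ b * p.2}.indicator (1 : ℝ × ℝ → ℝ) (y, u) ∂ν ∂γ :=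
        integral_integral_swap hint
    _ = ∫ u, cdf ν (b * u) ∂γ := by
        congr 1 with u
        rw [cdf_eq_real, ← integral_indicator_one measurableSet_Iic]
        simp [Set.indicator]

lemma integral_gammaMeasure_real_Ici_div {a r b : ℝ} (ha : 0 < a) (hr : 0 < r) (hb : 0 < b)
    (M : ℕ) :
    ∫ y, (gammaMeasure a 1).real (Set.Ici (y / b)) ∂gammaMeasure (M + 1) r =
      1 - (ascPochhammer ℝ M).eval (a + 1) / M ! *
        ∫ z, kummerPoly M (a + 1) z * exp (-(r * b * z)) ∂gammaMeasure a 1 := by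
  have := isProbabilityMeasure_gammaMeasure ha one_pos
  have := isProbabilityMeasure_gammaMeasure (a := M + 1) (by positivity) hr
  have hs : -1 < r * b := by linarith [mul_pos hr hb]
  have hcdf : ∀ᵐ u ∂gammaMeasure a 1,
      cdf (gammaMeasure (M + 1) r) (b * u) = 1 - erlangTail M (r * b * u) := by
    filter_upwards [ae_pos_gammaMeasure a 1] with u hu
    rw [cdf_gammaMeasure_natCast_add_one hr M (by positivity), mul_assoc]
  rw [integral_measureReal_Ici_div _ _ hb, integral_congr_ae hcdf,
    integral_sub (integrable_const 1) (integrable_erlangTail_mul_gammaMeasure ha hs M),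
    integral_erlangTail_mul_gammaMeasure ha hs]
  simp

section Independence

variable {Ω : Type*} [MeasurableSpace Ω] {μ : Measure Ω}

lemma integral_comp_prodMk_of_indepFun [IsFiniteMeasure μ] {S T E : Type*} [MeasurableSpace S]
    [MeasurableSpace T] [NormedAddCommGroup E] [NormedSpace ℝ E] {ν : Measure S} [SFinite ν]
    {Y : Ω → S} {X : Ω → T} (hY : HasLaw Y ν μ) (hX : AEMeasurable X μ) (hindep : IndepFun Y X μ)
    {f : S × T → E} (hf : Integrable f (ν.prod (μ.map X))) :
    ∫ ω, f (Y ω, X ω) ∂μ = ∫ ω, ∫ y, f (y, X ω) ∂ν ∂μ := by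
  have hlaw : HasLaw (fun ω => (Y ω, X ω)) (ν.prod (μ.map X)) μ :=
    hindep.hasLaw_prod hY ⟨hX, rfl⟩
  rw [← integral_map (f := fun x => ∫ y, f (y, x) ∂ν) hX
      hf.swap.aestronglyMeasurable.integral_prod_right', ← integral_prod_symm _ hf]
  exact hlaw.integral_comp hf.aestronglyMeasurable

lemma integrable_kummerPoly_mul_exp_neg_prod [IsFiniteMeasure μ] {a r : ℝ} (ha : 0 < a)
    (hr : 0 ≤ r) {B : Ω → ℝ} (hB : AEMeasurable B μ) (hBnonneg : ∀ᵐ ω ∂μ, 0 ≤ B ω) (M : ℕ)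
    (c : ℝ) :
    Integrable (fun p : Ω × ℝ => kummerPoly M c p.2 * exp (-(r * B p.1 * p.2)))
      (μ.prod (gammaMeasure a 1)) := by
  have := isProbabilityMeasure_gammaMeasure ha one_pos
  have hkummer := (integrable_kummerPoly_gammaMeasure ha one_pos M c).comp_snd μ
  refine hkummer.mul_bdd (c := 1) (by fun_prop) ?_
  filter_upwards [Measure.quasiMeasurePreserving_fst.ae hBnonneg,
    Measure.quasiMeasurePreserving_snd.ae (ae_pos_gammaMeasure a 1)] with p hB hz
  rw [norm_of_nonneg (exp_pos _).le, exp_le_one_iff]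
  exact neg_nonpos.2 (mul_nonneg (mul_nonneg hr hB) hz.le)

theorem integral_gammaMeasure_real_Ici_div_of_indepFun [IsProbabilityMeasure μ] {a r : ℝ}
    (ha : 0 < a) (hr : 0 < r) {M : ℕ} {Y B : Ω → ℝ} (hY : HasLaw Y (gammaMeasure (M + 1) r) μ)
    (hB : AEMeasurable B μ) (hBpos : ∀ᵐ ω ∂μ, 0 < B ω) (hindep : IndepFun Y B μ) :
    ∫ ω, (gammaMeasure a 1).real (Set.Ici (Y ω / B ω)) ∂μ =
      1 - (ascPochhammer ℝ M).eval (a + 1) / M ! *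
        ∫ z, kummerPoly M (a + 1) z * mgf B μ (-(r * z)) ∂gammaMeasure a 1 := by
  have := isProbabilityMeasure_gammaMeasure ha one_pos
  have := isProbabilityMeasure_gammaMeasure (a := M + 1) (by positivity) hr
  have := Measure.isProbabilityMeasure_map hB
  have htail : Antitone fun x : ℝ => (gammaMeasure a 1).real (Set.Ici x) :=
    fun x y hxy => measureReal_mono (Set.Ici_subset_Ici.2 hxy)
  have hint : Integrable (fun p : ℝ × ℝ => (gammaMeasure a 1).real (Set.Ici (p.1 / p.2)))
      ((gammaMeasure (M + 1) r).prod (μ.map B)) :=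
    .of_bound (htail.measurable.comp (by fun_prop)).aestronglyMeasurable 1
      (ae_of_all _ fun p => by
        rw [norm_of_nonneg measureReal_nonneg]; exact measureReal_le_one)
  have hjoint := integrable_kummerPoly_mul_exp_neg_prod ha hr.le hB (hBpos.mono fun _ => le_of_lt)
    M (a + 1)
  have hcond : ∀ᵐ ω ∂μ, _ :=
    hBpos.mono fun ω hω => integral_gammaMeasure_real_Ici_div ha hr hω M
  rw [integral_comp_prodMk_of_indepFun hY hB hindep hint, integral_congr_ae hcond,
    integral_sub (integrable_const 1) (hjoint.integral_prod_left.const_mul _), integral_const_mul,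
    integral_integral_swap hjoint]
  simp only [integral_const_mul, integral_const, probReal_univ, one_smul, mgf, neg_mul,
    mul_right_comm r]

end Independence

lemma Gamma_natCast_add_one_add_one_half (M : ℕ) :
    Gamma (M + 1 + 1 / 2) = (ascPochhammer ℝ M).eval (3 / 2) * (√π / 2) := by
  have hGamma : Gamma (3 / 2) = √π / 2 := by
    rw [show (3 : ℝ) / 2 = 1 / 2 + 1 by norm_num, Gamma_add_one (by norm_num), Gamma_one_half_eq]
    ring
  rw [← hGamma, ← Gamma_add_natCast (by norm_num)]
  ring_nf

lemma integral_gammaMeasure_one_half_one (f : ℝ → ℝ) :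
    ∫ z, f z ∂gammaMeasure (1 / 2) 1 =
      (√π)⁻¹ * ∫ z in Set.Ioi 0, z ^ (-(1 / 2) : ℝ) * exp (-z) * f z := by
  rw [integral_gammaMeasure one_half_pos one_pos, ← integral_const_mul]
  congr 1 with z
  rw [Gamma_one_half_eq, show (1 : ℝ) / 2 - 1 = -(1 / 2) by norm_num, one_rpow, one_mul,
    smul_eq_mul]
  ring

theorem stmt11_general {Ω : Type*} [MeasurableSpace Ω] (μ : Measure Ω) [IsProbabilityMeasure μ]
    (m : ℕ) (hm : 1 ≤ m) (r : ℝ) (hr : 0 < r) (Y X : Ω → ℝ)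
    (hY : HasLaw Y (gammaMeasure m r) μ) (hX : AEMeasurable X μ) (C : ℝ)
    (hpos : ∀ᵐ ω ∂μ, 0 < X ω + C) (hindep : IndepFun Y X μ) :
    ∫ ω, erfc √(Y ω / (X ω + C)) ∂μ =
      1 - (Gamma (m + 1 / 2) / Gamma m) * (2 / π) *
        ∫ z in Set.Ioi (0 : ℝ),
          z ^ (-(1 / 2) : ℝ) * exp (-z * (1 + r * C)) *
            (∑ n ∈ Finset.range m,
              ((ascPochhammer ℝ n).eval (1 - (m : ℝ)) /
                ((ascPochhammer ℝ n).eval ((3 : ℝ) / 2) * n !)) * z ^ n) *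
            ∫ ω, exp (-r * z * X ω) ∂μ := by
  obtain ⟨M, rfl⟩ := Nat.exists_eq_add_of_le' hm
  have hindep' : IndepFun Y (fun ω => X ω + C) μ :=
    hindep.comp measurable_id (measurable_add_const C)
  have hgamma := integral_gammaMeasure_real_Ici_div_of_indepFun one_half_pos hr
    (by simpa using hY) (hX.add_const C) hpos hindep'
  rw [show (1 : ℝ) / 2 + 1 = 3 / 2 by norm_num, integral_gammaMeasure_one_half_one] at hgamma
  have hintegrand : ∀ z : ℝ, z ^ (-(1 / 2) : ℝ) * exp (-z) *
        (kummerPoly M (3 / 2) z * mgf (fun ω => X ω + C) μ (-(r * z))) =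
      z ^ (-(1 / 2) : ℝ) * exp (-z * (1 + r * C)) * kummerPoly M (3 / 2) z *
        mgf X μ (-(r * z)) := by
    intro z
    rw [mgf_add_const, show -z * (1 + r * C) = -z + -(r * z) * C by ring, exp_add]
    ring
  have hparam : 1 - ((M : ℝ) + 1) = -M := by ring
  have hconst : Gamma (M + 1 + 1 / 2) / Gamma (M + 1) * (2 / π) =
      (ascPochhammer ℝ M).eval (3 / 2) / M ! * (√π)⁻¹ := by
    rw [Gamma_natCast_add_one_add_one_half, Gamma_nat_eq_factorial, ← sqrt_div_self]
    ring
  simp only [hintegrand] at hgamma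
  simp only [erfc_sqrt_eq_gammaMeasure_real_Ici, hgamma, kummerPoly, mgf, Nat.cast_succ, hparam,
    hconst, mul_assoc, neg_mul]

/-- Hamdi's lemma (general integer `m ≥ 1`): for `Y ~ Gamma(m, m)` (unit mean), `X ≥ 0`
independent of `Y`, and `C > 0`,
`E[erfc(√(Y/(X+C)))] = 1 − (Γ(m+1/2)/Γ(m)) (2/π) ∫_0^∞ z^{−1/2} e^{−z(1+mC)}
  (∑_{n=0}^{m−1} ((1−m)_n / ((3/2)_n n!)) z^n) E[e^{−mzX}] dz`,
the inner sum being the polynomial `₁F₁(1 − m; 3/2; z)`. -/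
theorem stmt11 {Ω : Type*} [MeasurableSpace Ω] (μ : Measure Ω) [IsProbabilityMeasure μ]
    (m : ℕ) (hm : 1 ≤ m)
    (Y X : Ω → ℝ) (hY : Measurable Y) (hX : Measurable X)
    (hYgamma : μ.map Y = gammaMeasure m m)
    (hXnonneg : ∀ ω, 0 ≤ X ω)
    (hindep : IndepFun Y X μ)
    (C : ℝ) (hC : 0 < C) :
    ∫ ω, erfc (Real.sqrt (Y ω / (X ω + C))) ∂μ =
      1 - (Real.Gamma (m + 1/2) / Real.Gamma m) * (2 / π) *
        ∫ z in Set.Ioi (0:ℝ),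
          z ^ (-(1/2) : ℝ) * Real.exp (-z * (1 + m * C)) *
            (∑ n ∈ Finset.range m,
              ((ascPochhammer ℝ n).eval (1 - (m : ℝ)) /
                ((ascPochhammer ℝ n).eval ((3:ℝ)/2) * Nat.factorial n)) * z ^ n) *
            ∫ ω, Real.exp (-(m : ℝ) * z * X ω) ∂μ :=
  stmt11_general μ m hm m (by exact_mod_cast hm) Y X ⟨hY.aemeasurable, hYgamma⟩ hX.aemeasurable C
    (ae_of_all _ fun ω => add_pos_of_nonneg_of_pos (hXnonneg ω) hC) hindep
end

section
/- Let λ > 0, P > 0, r₀ > 0, N₀ > 0 and T ≥ 0 be real. Let H be an exponential random variable with rate 1 and I a nonnegative real random variable independent of H whose Laplace transform satisfies E[e^{−z I}] = exp{ −πλ √(zP) · arctan( √(zP) / r₀² ) } for all z > 0. Then ℙ[ P·H·r₀^{−4} / (I + N₀) < T ] = 1 − exp{ −T N₀ r₀⁴ / P − πλ √T r₀² arctan(√T) }. -/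
open MeasureTheory ProbabilityTheory Real

/-!
An exponential variable of rate `r` exceeds an independent nonnegative variable `Y` with
probability `E[e^{-rY}]`, so Rayleigh fading turns the coverage probability into a Laplace
transform. The SINR is at least `T` exactly when the fading power exceeds `z (I + N₀)` with
`z = T r₀⁴ / P`; the noise contributes the factor `e^{-z N₀}` and the interference its Laplace
transform at `z`, where `√(z P) = √T r₀²`.
-/

section ExponentialTail

variable {Ω : Type*} {mΩ : MeasurableSpace Ω} {μ : Measure Ω}

lemma measure_prodMk_mem_eq_lintegral_of_indepFun [IsFiniteMeasure μ] {α β : Type*}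
    {mα : MeasurableSpace α} {mβ : MeasurableSpace β} {ν : Measure α} {X : Ω → α} {Y : Ω → β}
    (hX : HasLaw X ν μ) (hY : AEMeasurable Y μ) (hXY : IndepFun X Y μ)
    {S : Set (α × β)} (hS : MeasurableSet S) :
    μ {ω | (X ω, Y ω) ∈ S} = ∫⁻ ω, ν {x | (x, Y ω) ∈ S} ∂μ := by
  have : IsFiniteMeasure ν := hX.isFiniteMeasure_iff.mp inferInstance
  calc μ {ω | (X ω, Y ω) ∈ S}
      = μ.map (fun ω ↦ (X ω, Y ω)) S :=
        (Measure.map_apply_of_aemeasurable (hX.aemeasurable.prodMk hY) hS).symm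
    _ = ∫⁻ y, ν {x | (x, y) ∈ S} ∂μ.map Y := by
        rw [hXY.map_prod_eq_prod_map_map hX.aemeasurable hY, hX.map_eq,
          Measure.prod_apply_symm hS]
        rfl
    _ = ∫⁻ ω, ν {x | (x, Y ω) ∈ S} ∂μ :=
        lintegral_map' (measurable_measure_prodMk_right hS).aemeasurable hY

lemma nullSingletonClass_expMeasure (r : ℝ) : NullSingletonClass (expMeasure r) := by
  unfold expMeasure gammaMeasure
  infer_instance

lemma expMeasure_Ici {r x : ℝ} (hr : 0 < r) (hx : 0 ≤ x) :
    expMeasure r (Set.Ici x) = ENNReal.ofReal (exp (-(r * x))) := by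
  have := isProbabilityMeasure_expMeasure hr
  have := nullSingletonClass_expMeasure r
  rw [← ofReal_measureReal, ← measureReal_congr Ioi_ae_eq_Ici, ← Set.compl_Iic,
    probReal_compl_eq_one_sub measurableSet_Iic, ← cdf_eq_real, cdf_expMeasure_eq hr, if_pos hx,
    sub_sub_cancel]

lemma measureReal_le_exponential_eq_mgf {r : ℝ} (hr : 0 < r) {X Y : Ω → ℝ}
    (hX : HasLaw X (expMeasure r) μ) (hY : AEMeasurable Y μ) (hY_nonneg : 0 ≤ᵐ[μ] Y)
    (hXY : IndepFun X Y μ) :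
    μ.real {ω | Y ω ≤ X ω} = mgf Y μ (-r) := by
  have := isProbabilityMeasure_expMeasure hr
  have := hX.isProbabilityMeasure
  have h_tail : μ {ω | Y ω ≤ X ω} = ∫⁻ ω, ENNReal.ofReal (exp (-r * Y ω)) ∂μ :=
    calc μ {ω | Y ω ≤ X ω}
        = ∫⁻ ω, expMeasure r (Set.Ici (Y ω)) ∂μ :=
          measure_prodMk_mem_eq_lintegral_of_indepFun hX hY hXY
            (measurableSet_le measurable_snd measurable_fst)
      _ = ∫⁻ ω, ENNReal.ofReal (exp (-r * Y ω)) ∂μ := by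
          refine lintegral_congr_ae ?_
          filter_upwards [hY_nonneg] with ω hω
          rw [expMeasure_Ici hr hω, neg_mul]
  rw [measureReal_def, h_tail, mgf, integral_eq_lintegral_of_nonneg_ae
    (.of_forall fun _ ↦ (exp_pos _).le) (by fun_prop)]

end ExponentialTail

section Sinr

variable {Ω : Type*} {g N T : ℝ} {H I : Ω → ℝ}

/-- The signal-to-interference-plus-noise ratio of a link with mean received power `g`, fading
power `H`, interference power `I` and noise power `N`. Transmit power and path loss enter only
through their product `g`. -/
noncomputable def sinr (g N : ℝ) (H I : Ω → ℝ) (ω : Ω) : ℝ :=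
  g * H ω / (I ω + N)

lemma le_sinr_iff (hg : 0 < g) {ω : Ω} (hIN : 0 < I ω + N) :
    T ≤ sinr g N H I ω ↔ T / g * (I ω + N) ≤ H ω := by
  rw [sinr, le_div_iff₀ hIN, div_mul_eq_mul_div, div_le_iff₀' hg]

variable {mΩ : MeasurableSpace Ω} {μ : Measure Ω}

lemma measureReal_le_sinr {r : ℝ} (hr : 0 < r) (hg : 0 < g) (hN : 0 < N) (hT : 0 ≤ T)
    (hH : HasLaw H (expMeasure r) μ) (hI : AEMeasurable I μ)
    (hI_nonneg : 0 ≤ᵐ[μ] I) (hHI : IndepFun H I μ) :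
    μ.real {ω | T ≤ sinr g N H I ω} =
      exp (-(r * (T / g)) * N) * mgf I μ (-(r * (T / g))) := by
  have hIN : ∀ᵐ ω ∂μ, 0 < I ω + N := by
    filter_upwards [hI_nonneg] with ω hω using add_pos_of_nonneg_of_pos hω hN
  have h_event : {ω | T ≤ sinr g N H I ω} =ᵐ[μ] {ω | T / g * (I ω + N) ≤ H ω} := by
    filter_upwards [hIN] with ω hω using propext (le_sinr_iff hg hω)
  have h_threshold : 0 ≤ᵐ[μ] fun ω ↦ T / g * (I ω + N) := by
    filter_upwards [hIN] with ω hω using mul_nonneg (div_nonneg hT hg.le) hω.le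
  have h_indep : IndepFun H (fun ω ↦ T / g * (I ω + N)) μ :=
    hHI.comp measurable_id (by fun_prop : Measurable fun x ↦ T / g * (x + N))
  rw [measureReal_congr h_event,
    measureReal_le_exponential_eq_mgf hr hH (by fun_prop) h_threshold h_indep,
    mgf_const_mul, mgf_add_const, mul_neg, mul_comm (T / g) r, mul_comm (exp _)]

lemma measureReal_sinr_lt {r : ℝ} (hr : 0 < r) (hg : 0 < g) (hN : 0 < N) (hT : 0 ≤ T)
    (hH : HasLaw H (expMeasure r) μ) (hI : AEMeasurable I μ)
    (hI_nonneg : 0 ≤ᵐ[μ] I) (hHI : IndepFun H I μ) :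
    μ.real {ω | sinr g N H I ω < T} =
      1 - exp (-(r * (T / g)) * N) * mgf I μ (-(r * (T / g))) := by
  have := isProbabilityMeasure_expMeasure hr
  have := hH.isProbabilityMeasure
  have h_meas : AEMeasurable (sinr g N H I) μ :=
    (hH.aemeasurable.const_mul g).div (hI.add_const N)
  rw [← measureReal_le_sinr hr hg hN hT hH hI hI_nonneg hHI,
    ← probReal_compl_eq_one_sub₀ (nullMeasurableSet_le aemeasurable_const h_meas)]
  simp only [Set.compl_ofPred, not_le]

end Sinr

section InterferenceLaplace

/-- The Laplace transform, at `z`, of the interference from a Poisson field of transmitters of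
intensity `lam` and power `P` outside a disc of radius `r₀`, for path-loss exponent `4` and Rayleigh
fading. -/
noncomputable def interferenceLaplace (lam P r₀ z : ℝ) : ℝ :=
  exp (-(π * lam * √(z * P) * arctan (√(z * P) / r₀ ^ 2)))

lemma interferenceLaplace_zero (lam P r₀ : ℝ) : interferenceLaplace lam P r₀ 0 = 1 := by
  simp [interferenceLaplace]

lemma interferenceLaplace_div_receivedPower {lam P r₀ T : ℝ} (hP : P ≠ 0) (hr₀ : r₀ ≠ 0)
    (hT : 0 ≤ T) :
    interferenceLaplace lam P r₀ (T / (P * r₀ ^ (-4 : ℤ))) =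
      exp (-(π * lam * √T * r₀ ^ 2 * arctan √T)) := by
  have h_sqrt : √(T / (P * r₀ ^ (-4 : ℤ)) * P) = √T * r₀ ^ 2 := by
    rw [show T / (P * r₀ ^ (-4 : ℤ)) * P = T * (r₀ ^ 2) ^ 2 by field_simp,
      sqrt_mul hT, sqrt_sq (sq_nonneg r₀)]
  rw [interferenceLaplace, h_sqrt, mul_div_cancel_right₀ _ (pow_ne_zero 2 hr₀), ← mul_assoc]

end InterferenceLaplace

/-- Outage probability in a Poisson cellular network with `η = 4`: with `H` unit-rate
exponential, `I ≥ 0` independent of `H` with Laplace transform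
`E[e^{−zI}] = exp{−πλ√(zP) arctan(√(zP)/r₀²)}`,
`ℙ[P H r₀^{−4}/(I + N₀) < T] = 1 − exp{−T N₀ r₀⁴/P − πλ√T r₀² arctan(√T)}`. -/
theorem stmt13 {Ω : Type*} [MeasurableSpace Ω] (μ : Measure Ω) [IsProbabilityMeasure μ]
    (lam P r₀ N₀ T : ℝ) (hlam : 0 < lam) (hP : 0 < P) (hr₀ : 0 < r₀) (hN₀ : 0 < N₀)
    (hT : 0 ≤ T)
    (H I : Ω → ℝ) (hH : Measurable H) (hI : Measurable I)
    (hHexp : μ.map H = expMeasure 1)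
    (hInonneg : ∀ ω, 0 ≤ I ω)
    (hindep : IndepFun H I μ)
    (hLT : ∀ z : ℝ, 0 < z → ∫ ω, Real.exp (-z * I ω) ∂μ =
      Real.exp (-(π * lam * Real.sqrt (z * P) * Real.arctan (Real.sqrt (z * P) / r₀ ^ 2)))) :
    (μ {ω | P * H ω * r₀ ^ (-4 : ℤ) / (I ω + N₀) < T}).toReal =
      1 - Real.exp (-(T * N₀ * r₀ ^ 4 / P) -
        π * lam * Real.sqrt T * r₀ ^ 2 * Real.arctan (Real.sqrt T)) := by
  have h_sinr : {ω | P * H ω * r₀ ^ (-4 : ℤ) / (I ω + N₀) < T} =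
      {ω | sinr (P * r₀ ^ (-4 : ℤ)) N₀ H I ω < T} := by
    simp only [sinr, mul_right_comm]
  have h_mgf : ∀ z, 0 ≤ z → mgf I μ (-z) = interferenceLaplace lam P r₀ z := by
    intro z hz
    rcases hz.eq_or_lt with rfl | hz
    · rw [neg_zero, mgf_zero, interferenceLaplace_zero]
    · exact hLT z hz
  have h_noise : -(T / (P * r₀ ^ (-4 : ℤ))) * N₀ = -(T * N₀ * r₀ ^ 4 / P) := by
    field_simp
  rw [h_sinr, ← measureReal_def,
    measureReal_sinr_lt one_pos (by positivity) hN₀ hT ⟨hH.aemeasurable, hHexp⟩ hI.aemeasurable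
      (.of_forall hInonneg) hindep,
    one_mul, h_mgf _ (by positivity), interferenceLaplace_div_receivedPower hP.ne' hr₀.ne' hT,
    h_noise, ← exp_add, ← sub_eq_add_neg]
end
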